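/- Under the stated hypotheses on φ, the identity ∫₀^∞ s^{a+4}·φ'(s)² ds = ((5+a)/(5−a))·∫₀^∞ s^{a+4}·φ(s)² ds holds. -/

import Mathlib

open MeasureTheory Real in
lemma aux_bigO (q C δ : ℝ) (hC : 0 < C) (hδ : 0 < δ) (u : ℝ → ℝ)
    (hu : ∀ s : ℝ, 1 ≤ s → |u s| ≤ C * Real.exp (-δ * s)) :
    (fun s : ℝ => s ^ q * (u s)^2) =O[Filter.atTop] (fun s => Real.exp (-δ * s)) := by
  have h1 : (fun s : ℝ => s ^ q) =O[Filter.atTop] (fun s => Real.exp (δ * s)) :=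
    (isLittleO_rpow_exp_pos_mul_atTop q hδ).isBigO
  have h2 : u =O[Filter.atTop] (fun s => Real.exp (-δ * s)) := by
    refine Asymptotics.IsBigO.of_bound C ?_
    filter_upwards [Filter.eventually_ge_atTop 1] with s hs
    simpa [abs_of_pos (Real.exp_pos _)] using hu s hs
  refine (h1.mul (h2.pow 2)).congr_right ?_
  intro s
  rw [← Real.exp_nat_mul, ← Real.exp_add]
  congr 1
  push_cast
  ring

open MeasureTheory Real in
lemma aux_int (q C δ D : ℝ) (hC : 0 < C) (hδ : 0 < δ) (u : ℝ → ℝ)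
    (hc : ContinuousOn u (Set.Ioi 0))
    (hD : ∀ s ∈ Set.Ioc (0:ℝ) 1, |s ^ q * (u s)^2| ≤ D)
    (hu : ∀ s : ℝ, 1 ≤ s → |u s| ≤ C * Real.exp (-δ * s)) :
    IntegrableOn (fun s : ℝ => s ^ q * (u s)^2) (Set.Ioi 0) := by
  have hcont : ContinuousOn (fun s : ℝ => s ^ q * (u s)^2) (Set.Ioi 0) := by
    refine ContinuousOn.mul ?_ (hc.pow 2)
    exact continuousOn_id.rpow_const (fun s hs => Or.inl (ne_of_gt hs))
  rw [← Set.Ioc_union_Ioi_eq_Ioi (zero_le_one' ℝ)]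
  refine IntegrableOn.union ?_ ?_
  · have hfin : IntegrableOn (fun _ : ℝ => D) (Set.Ioc (0:ℝ) 1) :=
      integrableOn_const (by simp)
    refine Integrable.mono' hfin ?_ ?_
    · exact ((hcont.mono Set.Ioc_subset_Ioi_self).aestronglyMeasurable measurableSet_Ioc)
    · filter_upwards [ae_restrict_mem measurableSet_Ioc] with s hs
      exact hD s hs
  · refine integrable_of_isBigO_exp_neg hδ (hcont.mono ?_) (aux_bigO q C δ hC hδ u hu)
    intro s hs
    exact lt_of_lt_of_le one_pos (Set.mem_Ici.mp hs)

open MeasureTheory Real in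
theorem stmt_6 (γ a : ℝ) (hγ : γ ∈ Set.Ioo (0:ℝ) 1) (ha : a = 1 - 2*γ)
    (φ : ℝ → ℝ) (hφ : ContDiffOn ℝ 2 φ (Set.Ioi 0))
    (hode : ∀ s : ℝ, 0 < s → deriv (deriv φ) s + (a / s) * deriv φ s - φ s = 0)
    (hbdd : ∃ C : ℝ, ∀ s ∈ Set.Ioc (0:ℝ) 1, |φ s| ≤ C)
    (hbdd' : ∃ C : ℝ, ∀ s ∈ Set.Ioc (0:ℝ) 1, |s ^ a * deriv φ s| ≤ C)
    (hdecay : ∃ C δ : ℝ, 0 < C ∧ 0 < δ ∧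
      ∀ s : ℝ, 1 ≤ s → |φ s| + |deriv φ s| ≤ C * Real.exp (-δ * s)) :
    ∫ s in Set.Ioi (0:ℝ), s ^ (a+4) * (deriv φ s)^2 =
      ((5+a)/(5-a)) * ∫ s in Set.Ioi (0:ℝ), s ^ (a+4) * (φ s)^2 := by
  obtain ⟨hγ0, hγ1⟩ := hγ
  obtain ⟨A, hA⟩ := hbdd
  obtain ⟨B, hB⟩ := hbdd'
  obtain ⟨C, δ, hC, hδ, hdec⟩ := hdecay
  have ha1 : -1 < a := by linarith
  have ha2 : a < 1 := by linarith
  have hd1 : ∀ s : ℝ, 0 < s → HasDerivAt φ (deriv φ s) s := fun s hs =>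
    ((hφ.contDiffAt (Ioi_mem_nhds hs)).differentiableAt (by norm_num)).hasDerivAt
  have hφ' : ContDiffOn ℝ 1 (deriv φ) (Set.Ioi 0) :=
    hφ.deriv_of_isOpen isOpen_Ioi (by norm_num)
  have hd2 : ∀ s : ℝ, 0 < s → HasDerivAt (deriv φ) (φ s - a / s * deriv φ s) s := fun s hs => by
    have := ((hφ'.contDiffAt (Ioi_mem_nhds hs)).differentiableAt (by norm_num)).hasDerivAt
    have e : φ s - a / s * deriv φ s = deriv (deriv φ) s := by linarith [hode s hs]
    rw [e]
    exact this
  have hu1 : ∀ s : ℝ, 1 ≤ s → |φ s| ≤ C * Real.exp (-δ * s) := fun s hs => by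
    linarith [hdec s hs, abs_nonneg (deriv φ s)]
  have hu2 : ∀ s : ℝ, 1 ≤ s → |deriv φ s| ≤ C * Real.exp (-δ * s) := fun s hs => by
    linarith [hdec s hs, abs_nonneg (φ s)]
  have b1 : ∀ q : ℝ, ∀ s ∈ Set.Ioc (0:ℝ) 1, |s ^ q * (φ s)^2| ≤ s ^ q * A^2 := by
    intro q s hs
    have h0 := Real.rpow_nonneg hs.1.le q
    rw [abs_of_nonneg (by positivity)]
    have := sq_le_sq' (neg_le_of_abs_le (hA s hs)) (le_of_abs_le (hA s hs))
    gcongr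
  have b2 : ∀ q : ℝ, ∀ s ∈ Set.Ioc (0:ℝ) 1,
      |s ^ q * (deriv φ s)^2| ≤ s ^ (q - 2 * a) * B^2 := by
    intro q s hs
    have h0 := Real.rpow_nonneg hs.1.le q
    have h1 := Real.rpow_nonneg hs.1.le (q - 2 * a)
    rw [abs_of_nonneg (by positivity)]
    have := sq_le_sq' (neg_le_of_abs_le (hB s hs)) (le_of_abs_le (hB s hs))
    have e : s ^ q = s ^ (q - 2 * a) * (s ^ a * s ^ a) := by
      rw [← Real.rpow_add hs.1, ← Real.rpow_add hs.1]; congr 1; ring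
    calc s ^ q * (deriv φ s)^2 = s ^ (q - 2 * a) * (s ^ a * deriv φ s)^2 := by rw [e]; ring
      _ ≤ _ := by gcongr
  have i1 := aux_int (a+4) C δ (A^2) hC hδ φ hφ.continuousOn (fun s hs => (b1 _ s hs).trans
    (mul_le_of_le_one_left (sq_nonneg _) (Real.rpow_le_one hs.1.le hs.2 (by linarith)))) hu1
  have i2 := aux_int (a+4) C δ (B^2) hC hδ (deriv φ) hφ'.continuousOn
    (fun s hs => (b2 _ s hs).trans
    (mul_le_of_le_one_left (sq_nonneg _) (Real.rpow_le_one hs.1.le hs.2 (by linarith)))) hu2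
  have hexp : Filter.Tendsto (fun s : ℝ => Real.exp (-δ * s)) Filter.atTop (nhds 0) := by
    refine Real.tendsto_exp_atBot.comp ?_
    exact Filter.tendsto_id.const_mul_atTop_of_neg (by linarith)
  have t1 := (aux_bigO (a+5) C δ hC hδ φ hu1).trans_tendsto hexp
  have t2 := (aux_bigO (a+5) C δ hC hδ (deriv φ) hu2).trans_tendsto hexp
  have key : ∀ (q M : ℝ) (u : ℝ → ℝ), 0 < q →
      (∀ s ∈ Set.Ioc (0:ℝ) 1, |s ^ (a+5) * (u s)^2| ≤ s ^ q * M) →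
      ContinuousWithinAt (fun s : ℝ => s ^ (a+5) * (u s)^2) (Set.Ici 0) 0 := by
    intro q M u hq hM
    have hz : (0:ℝ) ^ (a+5) = 0 := Real.zero_rpow (by linarith)
    have hz' : (0:ℝ) ^ q = 0 := Real.zero_rpow hq.ne'
    have ht : Filter.Tendsto (fun s : ℝ => s ^ q * M) (nhdsWithin 0 (Set.Ici 0)) (nhds 0) := by
      have : Continuous (fun s : ℝ => s ^ q * M) :=
        (Real.continuous_rpow_const hq.le).mul continuous_const
      have h := this.tendsto 0
      simp only [hz', zero_mul] at h
      exact h.mono_left nhdsWithin_le_nhds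
    unfold ContinuousWithinAt
    simp only [hz, zero_mul]
    refine squeeze_zero_norm' ?_ ht
    filter_upwards [self_mem_nhdsWithin,
      mem_nhdsWithin_of_mem_nhds (Iio_mem_nhds (zero_lt_one' ℝ))] with s hs hs1
    rcases eq_or_lt_of_le (show (0:ℝ) ≤ s from hs) with h | h
    · subst h
      simp [hz, hz']
    · exact hM s ⟨h, le_of_lt hs1⟩
  have c1 := key (a+5) (A^2) φ (by linarith) (b1 _)
  have c2 := key (a+5-2*a) (B^2) (deriv φ) (by linarith) (b2 _)
  have hI : IntegrableOn (fun s : ℝ => (5-a) * (s ^ (a+4) * (deriv φ s)^2)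
      - (5+a) * (s ^ (a+4) * (φ s)^2)) (Set.Ioi 0) :=
    (i2.const_mul (5-a)).sub (i1.const_mul (5+a))
  have hF := integral_Ioi_of_hasDerivAt_of_tendsto (a := (0:ℝ)) (m := 0 - 0)
    (f := fun s : ℝ => s ^ (a+5) * (deriv φ s)^2 - s ^ (a+5) * (φ s)^2)
    (f' := fun s : ℝ => (5-a) * (s ^ (a+4) * (deriv φ s)^2) - (5+a) * (s ^ (a+4) * (φ s)^2))
    (c2.sub c1) (fun s hs => by
      have hs : 0 < s := hs
      have hp : HasDerivAt (fun s : ℝ => s ^ (a+5)) ((a+5) * s ^ (a+4)) s := by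
        have := Real.hasDerivAt_rpow_const (x := s) (p := a+5) (Or.inl hs.ne')
        convert this using 3
        ring
      have e : s ^ (a+5) = s ^ (a+4) * s := by
        rw [show a + 5 = (a+4) + 1 by ring, Real.rpow_add_one hs.ne']
      have := (hp.mul ((hd2 s hs).pow 2)).sub (hp.mul ((hd1 s hs).pow 2))
      refine this.congr_deriv ?_
      simp only [Pi.pow_apply]
      rw [e]
      field_simp
      push_cast
      ring)
    hI (t2.sub t1)
  rw [integral_sub (i2.const_mul (5-a)) (i1.const_mul (5+a)), integral_const_mul,
    integral_const_mul, Real.zero_rpow (by linarith)] at hF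
  have h5 : 5 - a ≠ 0 := by linarith
  field_simp
  linarith
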